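/- Inside GL₂(ℚ₂), let Γ₀ be the set of 2×2 matrices with entries in ℤ₂ whose determinant is a unit of ℤ₂ and whose lower-left entry lies in 2ℤ₂; let g = [[0, 1], [2, 0]]; let 𝒦 be the subgroup of GL₂(ℚ₂) generated by all scalar matrices λ·I (λ ∈ ℚ₂^×) together with Γ₀ and g; and let G be the set of matrices M ∈ Γ₀ such that M₁₂ + M₂₁/2 ∈ 2ℤ₂. Then: (i) G is a subgroup of Γ₀ of index 2; (ii) the subgroup ℚ₂^×·G (scalar matrices times G) is normal in 𝒦; and (iii) the quotient 𝒦/(ℚ₂^×·G) is isomorphic to (ℤ/2)², generated by the classes of the matrices c = [[1, 2], [2, −1]] and g. -/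

import Mathlib

open Matrix

noncomputable section

/-- The set `Γ₀ ⊆ GL₂(ℚ₂)` of matrices with entries in `ℤ₂`, determinant a unit of
`ℤ₂`, and lower-left entry in `2ℤ₂`. -/
def gammaZeroSet : Set (GL (Fin 2) ℚ_[2]) :=
  {M | (∀ i j, ‖(M : Matrix (Fin 2) (Fin 2) ℚ_[2]) i j‖ ≤ 1) ∧
    ‖(M : Matrix (Fin 2) (Fin 2) ℚ_[2]).det‖ = 1 ∧
    ‖(M : Matrix (Fin 2) (Fin 2) ℚ_[2]) 1 0‖ ≤ 2⁻¹}

/-- The set `G ⊆ Γ₀` of matrices `M` with `M₁₂ + M₂₁/2 ∈ 2ℤ₂`. -/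
def GSet : Set (GL (Fin 2) ℚ_[2]) :=
  {M | M ∈ gammaZeroSet ∧
    ‖(M : Matrix (Fin 2) (Fin 2) ℚ_[2]) 0 1 +
      (M : Matrix (Fin 2) (Fin 2) ℚ_[2]) 1 0 / 2‖ ≤ 2⁻¹}

/-- The set of scalar matrices `λ·I`, `λ ∈ ℚ₂^×`. -/
def scalarSet : Set (GL (Fin 2) ℚ_[2]) :=
  {M | ∃ lam : ℚ_[2], lam ≠ 0 ∧
    (M : Matrix (Fin 2) (Fin 2) ℚ_[2]) = lam • (1 : Matrix (Fin 2) (Fin 2) ℚ_[2])}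

/-- The element `g = [[0, 1], [2, 0]]` of `GL₂(ℚ₂)`. -/
def gElt : GL (Fin 2) ℚ_[2] :=
  Matrix.GeneralLinearGroup.mkOfDetNeZero !![0, 1; 2, 0] (by
    rw [Matrix.det_fin_two_of]; norm_num)

/-- The element `c = [[1, 2], [2, -1]]` of `GL₂(ℚ₂)`. -/
def cElt : GL (Fin 2) ℚ_[2] :=
  Matrix.GeneralLinearGroup.mkOfDetNeZero !![1, 2; 2, -1] (by
    rw [Matrix.det_fin_two_of]; norm_num)

/-- The group `𝒦` generated by the scalar matrices, `Γ₀` and `g`. -/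
def KSub : Subgroup (GL (Fin 2) ℚ_[2]) :=
  Subgroup.closure (scalarSet ∪ gammaZeroSet ∪ {gElt})

/-- The group `ℚ₂^× · G` generated by the scalar matrices and `G`. -/
def NSub : Subgroup (GL (Fin 2) ℚ_[2]) :=
  Subgroup.closure (scalarSet ∪ GSet)

/-!
Modulo `2` the diagonal entries of an element of `Γ₀` are `1`, which makes
`χ(M) = tr (g⁻¹ M) = M₁₂ + M₂₁/2 mod 2` a quadratic character of `Γ₀`; its kernel is `G`, and
`χ(c) ≠ 0`. Conjugation by `g` exchanges `M₁₁` with `M₂₂` and `M₁₂` with `M₂₁/2`, so it preserves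
`Γ₀` and `χ`. Hence `𝒦 = ℚ₂^×·⟨Γ₀, g⟩` normalizes `ℚ₂^×·G`, and the quotient is generated by the
classes of `c` and `g`, which commute and, as `c²` lies in `G` and `g²` is scalar, square to `1`.
Scalar matrices in `Γ₀` lie in `G`, so the class of `c` is nontrivial; the elements of `ℚ₂^×·Γ₀`
have nonzero upper-left entry, so neither `g` nor `cg` lies there. The quotient is therefore a
Klein four-group.
-/

open scoped commutatorElement

section KleinFourQuotient

instance : IsKleinFour (Multiplicative (ZMod 2) × Multiplicative (ZMod 2)) where
  card_four := by simp
  exponent_two := by simp [Monoid.exponent_prod]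

variable {G : Type*} [Group G]

theorem eq_one_or_eq_of_closure_pair_eq_top {x y : G} (hx : x * x = 1) (hy : y * y = 1)
    (hxy : Commute x y) (htop : Subgroup.closure {x, y} = ⊤) (q : G) :
    q = 1 ∨ q = x ∨ q = y ∨ q = x * y := by
  have hx' : x⁻¹ = x := inv_eq_of_mul_eq_one_left hx
  have hy' : y⁻¹ = y := inv_eq_of_mul_eq_one_left hy
  have hxxy : x * (x * y) = y := by rw [← mul_assoc, hx, one_mul]
  have hyxy : y * (x * y) = x := by rw [hxy.eq, ← mul_assoc, hy, one_mul]
  have hq : q ∈ Subgroup.closure {x, y} := htop ▸ Subgroup.mem_top q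
  induction hq using Subgroup.closure_induction_left with
  | one => exact .inl rfl
  | mul_left z hz q _ ih | inv_mul_cancel z hz q _ ih =>
    rcases hz with rfl | rfl <;> rcases ih with rfl | rfl | rfl | rfl <;>
      simp [hx', hy', hx, hy, hxxy, hyxy, ← hxy.eq]

theorem isKleinFour_of_closure_pair_eq_top {x y : G} (hx : x * x = 1) (hy : y * y = 1)
    (hxy : Commute x y) (hx1 : x ≠ 1) (hy1 : y ≠ 1) (hxy1 : x * y ≠ 1)
    (htop : Subgroup.closure {x, y} = ⊤) : IsKleinFour G := by
  have cases_of := eq_one_or_eq_of_closure_pair_eq_top hx hy hxy htop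
  have hne : x ≠ y := fun h => hxy1 (h ▸ hx)
  have huniv : (Set.univ : Set G) = {1, x, y, x * y} :=
    (Set.eq_univ_of_forall cases_of).symm
  have : Nontrivial G := ⟨x, 1, hx1⟩
  refine ⟨?_, (Monoid.exponent_eq_prime_iff Nat.prime_two).2 fun q hq => ?_⟩
  · rw [← Set.ncard_univ, huniv, Set.ncard_insert_of_notMem, Set.ncard_insert_of_notMem,
      Set.ncard_pair] <;> simp [*, Ne.symm, eq_comm]
  · refine orderOf_eq_prime ?_ hq
    rcases cases_of q with rfl | rfl | rfl | rfl
    · exact one_pow 2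
    · rw [sq, hx]
    · rw [sq, hy]
    · rw [hxy.mul_pow, sq, sq, hx, hy, one_mul]

theorem closure_image_eq_top_of_ker_sup_closure_eq_top {G' : Type*} [Group G'] {f : G →* G'}
    (hf : Function.Surjective f) {s : Set G} (hs : f.ker ⊔ Subgroup.closure s = ⊤) :
    Subgroup.closure (f '' s) = ⊤ := by
  rw [← MonoidHom.map_closure, ← Subgroup.map_top_of_surjective f hf, Subgroup.map_eq_map_iff,
    sup_comm, hs, top_sup_eq]

theorem isKleinFour_quotient {N : Subgroup G} [N.Normal] {c g : G} (hcc : c * c ∈ N)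
    (hgg : g * g ∈ N) (hcomm : ⁅c, g⁆ ∈ N) (hc : c ∉ N) (hg : g ∉ N) (hcg : c * g ∉ N)
    (htop : N ⊔ Subgroup.closure {c, g} = ⊤) : IsKleinFour (G ⧸ N) := by
  let π := QuotientGroup.mk' N
  have hπ (x : G) : π x = 1 ↔ x ∈ N := QuotientGroup.eq_one_iff x
  refine isKleinFour_of_closure_pair_eq_top (x := π c) (y := π g) ?_ ?_ ?_ ?_ ?_ ?_ ?_
  · rwa [← map_mul, hπ]
  · rwa [← map_mul, hπ]
  · rwa [← commutatorElement_eq_one_iff_commute, ← map_commutatorElement, hπ]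
  · rwa [Ne, hπ]
  · rwa [Ne, hπ]
  · rwa [Ne, ← map_mul, hπ]
  · rw [← Set.image_pair]
    refine closure_image_eq_top_of_ker_sup_closure_eq_top (QuotientGroup.mk'_surjective N) ?_
    rwa [QuotientGroup.ker_mk']

theorem exists_surjective_ker_eq_of_isKleinFour_quotient (N : Subgroup G) [N.Normal]
    [IsKleinFour (G ⧸ N)] (V : Type*) [Group V] [IsKleinFour V] :
    ∃ f : G →* V, Function.Surjective f ∧ f.ker = N := by
  obtain ⟨e⟩ := IsKleinFour.nonempty_mulEquiv (G₁ := G ⧸ N) (G₂ := V)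
  refine ⟨e.toMonoidHom.comp (QuotientGroup.mk' N),
    e.surjective.comp (QuotientGroup.mk'_surjective N), ?_⟩
  exact (MonoidHom.ker_mulEquiv_comp (QuotientGroup.mk' N) e).trans (QuotientGroup.ker_mk' N)

theorem exists_surjective_ker_eq_subgroupOf_of_sup_closure_pair_eq {K N : Subgroup G}
    (hK : K ≤ Subgroup.normalizer (N : Set G)) {c g : G}
    (hgen : N ⊔ Subgroup.closure {c, g} = K) (hcc : c * c ∈ N) (hgg : g * g ∈ N)
    (hcomm : ⁅c, g⁆ ∈ N) (hc : c ∉ N) (hg : g ∉ N) (hcg : c * g ∉ N)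
    (V : Type*) [Group V] [IsKleinFour V] :
    ∃ (hcK : c ∈ K) (hgK : g ∈ K) (f : K →* V), Function.Surjective f ∧
      f.ker = N.subgroupOf K ∧ Subgroup.closure {f ⟨c, hcK⟩, f ⟨g, hgK⟩} = ⊤ := by
  have hclosure : {c, g} ⊆ (K : Set G) :=
    Subgroup.subset_closure.trans (le_sup_right.trans hgen.le : Subgroup.closure {c, g} ≤ K)
  have hcK : c ∈ K := hclosure (Set.mem_insert c {g})
  have hgK : g ∈ K := hclosure (Set.mem_insert_of_mem c rfl)
  have htop : N.subgroupOf K ⊔ Subgroup.closure {(⟨c, hcK⟩ : K), ⟨g, hgK⟩} = ⊤ := by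
    apply Subgroup.map_injective K.subtype_injective
    rw [Subgroup.map_sup, Subgroup.map_subgroupOf_eq_of_le (le_sup_left.trans hgen.le),
      MonoidHom.map_closure, Set.image_pair, ← MonoidHom.range_eq_map, K.range_subtype]
    exact hgen
  have : (N.subgroupOf K).Normal := Subgroup.normal_subgroupOf_of_le_normalizer hK
  have : IsKleinFour (K ⧸ N.subgroupOf K) :=
    isKleinFour_quotient (c := ⟨c, hcK⟩) (g := ⟨g, hgK⟩) hcc hgg hcomm hc hg hcg htop
  obtain ⟨f, hf, hker⟩ := exists_surjective_ker_eq_of_isKleinFour_quotient (N.subgroupOf K) V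
  refine ⟨hcK, hgK, f, hf, hker, ?_⟩
  rw [← Set.image_pair]
  exact closure_image_eq_top_of_ker_sup_closure_eq_top hf (hker ▸ htop)

end KleinFourQuotient

section IndexTwo

variable {G : Type*} [Group G] {Z Γ H : Subgroup G} {c g : G}

theorem mem_normalizer_of_mul_self_mem_normalizer
    (hgg : g * g ∈ Subgroup.normalizer (H : Set G)) (hH : ∀ x ∈ H, g * x * g⁻¹ ∈ H) :
    g ∈ Subgroup.normalizer (H : Set G) := by
  refine Subgroup.mem_normalizer_iff.2 fun x => ⟨hH x, fun hx => ?_⟩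
  have hconj : g * (g * x * g⁻¹) * g⁻¹ = g * g * x * (g * g)⁻¹ := by group
  exact (Subgroup.mem_normalizer_iff.1 hgg x).2 (hconj ▸ hH _ hx)

theorem mul_mem_iff_of_relIndex_eq_two (h : H.relIndex Γ = 2) {a b : G} (ha : a ∈ Γ)
    (hb : b ∈ Γ) : a * b ∈ H ↔ (a ∈ H ↔ b ∈ H) :=
  Subgroup.mul_mem_iff_of_index_two (H := H.subgroupOf Γ) h (a := ⟨a, ha⟩) (b := ⟨b, hb⟩)

theorem le_normalizer_of_relIndex_eq_two (hHΓ : H ≤ Γ) (h : H.relIndex Γ = 2) :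
    Γ ≤ Subgroup.normalizer (H : Set G) :=
  (Subgroup.normal_subgroupOf_iff_le_normalizer hHΓ).1 (Subgroup.normal_of_index_eq_two h)

theorem sup_zpowers_eq_of_relIndex_eq_two (hHΓ : H ≤ Γ) (h : H.relIndex Γ = 2) (hcΓ : c ∈ Γ)
    (hcH : c ∉ H) : H ⊔ Subgroup.zpowers c = Γ := by
  refine le_antisymm (sup_le hHΓ (Subgroup.zpowers_le.2 hcΓ)) fun γ hγ => ?_
  have hc : c ∈ H ⊔ Subgroup.zpowers c := Subgroup.mem_sup_right (Subgroup.mem_zpowers c)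
  by_cases hγH : γ ∈ H
  · exact Subgroup.mem_sup_left hγH
  · have hγc : γ * c ∈ H := by simp [mul_mem_iff_of_relIndex_eq_two h hγ hcΓ, hγH, hcH]
    exact (mul_mem_cancel_right hc).1 (Subgroup.mem_sup_left hγc)

theorem sup_sup_closure_pair_eq_of_relIndex_eq_two (hHΓ : H ≤ Γ) (h : H.relIndex Γ = 2)
    (hcΓ : c ∈ Γ) (hcH : c ∉ H) :
    Z ⊔ H ⊔ Subgroup.closure {c, g} = Z ⊔ Γ ⊔ Subgroup.zpowers g := by
  rw [← sup_zpowers_eq_of_relIndex_eq_two hHΓ h hcΓ hcH, Set.insert_eq, Subgroup.closure_union,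
    ← Subgroup.zpowers_eq_closure, ← Subgroup.zpowers_eq_closure]
  simp only [sup_assoc]

variable [Z.Normal]

theorem mem_of_mem_sup_of_inf_le (hHΓ : H ≤ Γ) (hZΓ : Z ⊓ Γ ≤ H) {x : G} (hx : x ∈ Z ⊔ H)
    (hxΓ : x ∈ Γ) : x ∈ H := by
  obtain ⟨z, hz, y, hy, rfl⟩ := Subgroup.mem_sup_of_normal_left.1 hx
  have hzΓ : z ∈ Γ := (mul_mem_cancel_right (hHΓ hy)).1 hxΓ
  exact mul_mem (hZΓ ⟨hz, hzΓ⟩) hy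

theorem sup_sup_zpowers_le_normalizer_sup (hHΓ : H ≤ Γ) (h : H.relIndex Γ = 2)
    (hgH : g ∈ Subgroup.normalizer (H : Set G)) :
    Z ⊔ Γ ⊔ Subgroup.zpowers g ≤ Subgroup.normalizer ((Z ⊔ H : Subgroup G) : Set G) := by
  have hle :
      Subgroup.normalizer (H : Set G) ≤ Subgroup.normalizer ((Z ⊔ H : Subgroup G) : Set G) :=
    sup_comm H Z ▸ Subgroup.normalizer_le_normalizer_sup_normal
  refine sup_le (sup_le (le_sup_left.trans Subgroup.le_normalizer) ?_) ?_
  · exact (le_normalizer_of_relIndex_eq_two hHΓ h).trans hle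
  · exact Subgroup.zpowers_le.2 (hle hgH)

theorem exists_surjective_ker_eq_subgroupOf_of_relIndex_eq_two (hHΓ : H ≤ Γ)
    (h : H.relIndex Γ = 2) (hZΓ : Z ⊓ Γ ≤ H) (hcΓ : c ∈ Γ) (hcH : c ∉ H)
    (hgΓ : g ∈ Subgroup.normalizer (Γ : Set G)) (hgH : g ∈ Subgroup.normalizer (H : Set G))
    (hgg : g * g ∈ Z) (hg : g ∉ Z ⊔ Γ) (V : Type*) [Group V] [IsKleinFour V] :
    ∃ (hcK : c ∈ Z ⊔ Γ ⊔ Subgroup.zpowers g) (hgK : g ∈ Z ⊔ Γ ⊔ Subgroup.zpowers g)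
      (f : ↥(Z ⊔ Γ ⊔ Subgroup.zpowers g) →* V), Function.Surjective f ∧
      f.ker = (Z ⊔ H).subgroupOf (Z ⊔ Γ ⊔ Subgroup.zpowers g) ∧
      Subgroup.closure {f ⟨c, hcK⟩, f ⟨g, hgK⟩} = ⊤ := by
  have hle : Z ⊔ H ≤ Z ⊔ Γ := sup_le_sup_left hHΓ Z
  have hconj : g * c⁻¹ * g⁻¹ ∈ Γ := (Subgroup.mem_normalizer_iff.1 hgΓ _).1 (inv_mem hcΓ)
  have hcomm : ⁅c, g⁆ ∈ H := by
    rw [commutatorElement_def, mul_assoc c, mul_assoc c,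
      mul_mem_iff_of_relIndex_eq_two h hcΓ hconj, ← Subgroup.mem_normalizer_iff.1 hgH, inv_mem_iff]
  refine exists_surjective_ker_eq_subgroupOf_of_sup_closure_pair_eq
    (sup_sup_zpowers_le_normalizer_sup hHΓ h hgH)
    (sup_sup_closure_pair_eq_of_relIndex_eq_two hHΓ h hcΓ hcH) ?_ (Subgroup.mem_sup_left hgg)
    (Subgroup.mem_sup_right hcomm) ?_ (fun hg' => hg (hle hg')) ?_ V
  · exact Subgroup.mem_sup_right ((mul_mem_iff_of_relIndex_eq_two h hcΓ hcΓ).2 Iff.rfl)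
  · exact fun hc => hcH (mem_of_mem_sup_of_inf_le hHΓ hZΓ hc hcΓ)
  · exact fun hcg => hg ((mul_mem_cancel_left (Subgroup.mem_sup_right hcΓ)).1 (hle hcg))

end IndexTwo

section ResidueMap

theorem toZMod_eq_zero_iff_norm_le_inv {p : ℕ} [Fact p.Prime] (x : ℤ_[p]) :
    PadicInt.toZMod x = 0 ↔ ‖x‖ ≤ (p : ℝ)⁻¹ := by
  rw [← RingHom.mem_ker, PadicInt.ker_toZMod, PadicInt.maximalIdeal_eq_span_p,
    ← pow_one (p : ℤ_[p]), ← PadicInt.norm_le_pow_iff_mem_span_pow]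
  simp

theorem toZMod_eq_one_iff_norm_eq_one (x : ℤ_[2]) : PadicInt.toZMod x = 1 ↔ ‖x‖ = 1 := by
  have eq_one_iff : ∀ y : ZMod 2, y = 1 ↔ y ≠ 0 := by decide
  rw [← PadicInt.isUnit_iff, ← isUnit_map_iff PadicInt.toZMod, isUnit_iff_ne_zero, eq_one_iff]

theorem toZMod_two : PadicInt.toZMod (2 : ℤ_[2]) = 0 := by
  rw [map_ofNat]; rfl

end ResidueMap

section IwahoriMatrix

/-- The general element `[[a, b], [2c, d]]` of the Iwahori order of `M₂(ℚ₂)`, with the factor `2`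
of the lower-left entry split off so that all four parameters range over `ℤ₂`. -/
def iwahoriMatrix (a b c d : ℤ_[2]) : Matrix (Fin 2) (Fin 2) ℚ_[2] :=
  !![(a : ℚ_[2]), b; 2 * c, d]

theorem iwahoriMatrix_mul (a b c d a' b' c' d' : ℤ_[2]) :
    iwahoriMatrix a b c d * iwahoriMatrix a' b' c' d' =
      iwahoriMatrix (a * a' + 2 * b * c') (a * b' + b * d') (c * a' + d * c')
        (2 * c * b' + d * d') := by
  have h2 : ((2 : ℤ_[2]) : ℚ_[2]) = 2 := rfl
  simp only [iwahoriMatrix, Matrix.mul_fin_two]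
  push_cast [h2]
  congr! 4 <;> ring_nf

theorem exists_eq_iwahoriMatrix_iff {A : Matrix (Fin 2) (Fin 2) ℚ_[2]} :
    (∃ a b c d, A = iwahoriMatrix a b c d) ↔ (∀ i j, ‖A i j‖ ≤ 1) ∧ ‖A 1 0‖ ≤ 2⁻¹ := by
  have h2 : ‖(2 : ℚ_[2])‖ = 2⁻¹ := by simpa using Padic.norm_p (p := 2)
  constructor
  · rintro ⟨a, b, c, d, rfl⟩
    have hc : ‖(2 * c : ℚ_[2])‖ ≤ 2⁻¹ := by
      rw [norm_mul, h2]
      exact mul_le_of_le_one_right (by norm_num) c.2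
    refine ⟨fun i j => ?_, hc⟩
    fin_cases i <;> fin_cases j
    exacts [a.2, b.2, hc.trans (by norm_num), d.2]
  · rintro ⟨hA, hA'⟩
    have hc : ‖A 1 0 / 2‖ ≤ 1 := by rwa [norm_div, h2, div_le_one (by norm_num)]
    refine ⟨⟨A 0 0, hA 0 0⟩, ⟨A 0 1, hA 0 1⟩, ⟨A 1 0 / 2, hc⟩, ⟨A 1 1, hA 1 1⟩, ?_⟩
    have hdiv : 2 * (A 1 0 / 2) = A 1 0 := mul_div_cancel₀ _ two_ne_zero
    simpa only [iwahoriMatrix, hdiv] using Matrix.eta_fin_two A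

theorem norm_det_iwahoriMatrix_eq_one_iff {a b c d : ℤ_[2]} :
    ‖(iwahoriMatrix a b c d).det‖ = 1 ↔ PadicInt.toZMod a = 1 ∧ PadicInt.toZMod d = 1 := by
  have hdet : (iwahoriMatrix a b c d).det = ((a * d - b * (2 * c) : ℤ_[2]) : ℚ_[2]) := by
    rw [iwahoriMatrix, Matrix.det_fin_two_of]; push_cast; rfl
  have mul_eq_one_iff : ∀ x y : ZMod 2, x * y = 1 ↔ x = 1 ∧ y = 1 := by decide
  rw [hdet, ← PadicInt.norm_def, ← toZMod_eq_one_iff_norm_eq_one, map_sub, map_mul, map_mul,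
    map_mul, toZMod_two, zero_mul, mul_zero, sub_zero, mul_eq_one_iff]

theorem mem_gammaZeroSet_iff {M : GL (Fin 2) ℚ_[2]} :
    M ∈ gammaZeroSet ↔ ∃ a b c d, PadicInt.toZMod a = 1 ∧ PadicInt.toZMod d = 1 ∧
      (M : Matrix (Fin 2) (Fin 2) ℚ_[2]) = iwahoriMatrix a b c d := by
  constructor
  · rintro ⟨hM, hdet, hM'⟩
    obtain ⟨a, b, c, d, h⟩ := exists_eq_iwahoriMatrix_iff.2 ⟨hM, hM'⟩
    obtain ⟨ha, hd⟩ := norm_det_iwahoriMatrix_eq_one_iff.1 (h ▸ hdet)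
    exact ⟨a, b, c, d, ha, hd, h⟩
  · rintro ⟨a, b, c, d, ha, hd, h⟩
    obtain ⟨hM, hM'⟩ := exists_eq_iwahoriMatrix_iff.1 ⟨a, b, c, d, h⟩
    exact ⟨hM, h ▸ norm_det_iwahoriMatrix_eq_one_iff.2 ⟨ha, hd⟩, hM'⟩

end IwahoriMatrix

section GammaZero

theorem norm_inv_apply_eq_norm_adjugate_apply {n 𝕜 : Type*} [Fintype n] [DecidableEq n]
    [NormedField 𝕜] {M : GL n 𝕜} (hM : ‖(M : Matrix n n 𝕜).det‖ = 1) (i j : n) :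
    ‖(M⁻¹ : GL n 𝕜) i j‖ = ‖(M : Matrix n n 𝕜).adjugate i j‖ := by
  rw [Matrix.coe_units_inv, Matrix.inv_def, Matrix.smul_apply, smul_eq_mul, norm_mul,
    Ring.inverse_eq_inv', norm_inv, hM, inv_one, one_mul]

/-- The Iwahori subgroup `Γ₀` of `GL₂(ℚ₂)`, as a subgroup. -/
def gammaZero : Subgroup (GL (Fin 2) ℚ_[2]) where
  carrier := gammaZeroSet
  mul_mem' {M N} hM hN := by
    obtain ⟨a, b, c, d, ha, hd, hM⟩ := mem_gammaZeroSet_iff.1 hM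
    obtain ⟨a', b', c', d', ha', hd', hN⟩ := mem_gammaZeroSet_iff.1 hN
    refine mem_gammaZeroSet_iff.2 ⟨_, _, _, _, ?_, ?_, by
      rw [Units.val_mul, hM, hN, iwahoriMatrix_mul]⟩
    · simp [toZMod_two, ha, ha']
    · simp [toZMod_two, hd, hd']
  one_mem' := mem_gammaZeroSet_iff.2
    ⟨1, 0, 0, 1, map_one _, map_one _, by simp [iwahoriMatrix, Matrix.one_fin_two]⟩
  inv_mem' {M} := by
    rintro ⟨hM, hdet, hM'⟩
    refine ⟨fun i j => ?_, ?_, ?_⟩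
    · rw [norm_inv_apply_eq_norm_adjugate_apply hdet, Matrix.adjugate_fin_two]
      fin_cases i <;> fin_cases j <;> simp [hM]
    · rw [Matrix.coe_units_inv, Matrix.det_nonsing_inv, Ring.inverse_eq_inv', norm_inv, hdet,
        inv_one]
    · rw [norm_inv_apply_eq_norm_adjugate_apply hdet, Matrix.adjugate_fin_two]
      simpa using hM'

theorem norm_apply_add_apply_div_two_le_one {M : GL (Fin 2) ℚ_[2]} (hM : M ∈ gammaZeroSet) :
    ‖M 0 1 + M 1 0 / 2‖ ≤ 1 := by
  obtain ⟨a, b, c, d, -, -, h⟩ := mem_gammaZeroSet_iff.1 hM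
  have hbc : M 0 1 + M 1 0 / 2 = ((b + c : ℤ_[2]) : ℚ_[2]) := by simp [h, iwahoriMatrix]
  exact hbc ▸ (b + c).2

/-- The function `M ↦ M₁₂ + M₂₁/2` from `Γ₀` to `ℤ₂`; it is the trace of `g⁻¹ M`. -/
def offDiagSum (M : gammaZero) : ℤ_[2] :=
  ⟨M.1 0 1 + M.1 1 0 / 2, norm_apply_add_apply_div_two_le_one M.2⟩

theorem offDiagSum_eq {M : gammaZero} {a b c d : ℤ_[2]}
    (hM : (M.1 : Matrix (Fin 2) (Fin 2) ℚ_[2]) = iwahoriMatrix a b c d) :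
    offDiagSum M = b + c :=
  Subtype.ext (by simp [offDiagSum, hM, iwahoriMatrix])

/-- The quadratic character `M ↦ M₁₂ + M₂₁/2 mod 2` of `Γ₀`, whose kernel is `G`. -/
def gammaZeroChar : gammaZero →* Multiplicative (ZMod 2) :=
  MonoidHom.mk' (fun M => .ofAdd (PadicInt.toZMod (offDiagSum M))) fun M N => by
    obtain ⟨a, b, c, d, ha, hd, hM⟩ := mem_gammaZeroSet_iff.1 M.2
    obtain ⟨a', b', c', d', ha', hd', hN⟩ := mem_gammaZeroSet_iff.1 N.2
    have hMN := (congrArg₂ (· * ·) hM hN).trans (iwahoriMatrix_mul a b c d a' b' c' d')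
    rw [offDiagSum_eq hM, offDiagSum_eq hN, offDiagSum_eq (M := M * N) hMN, ← ofAdd_add]
    congr 1
    simp only [map_add, map_mul, ha, hd, ha', hd', one_mul, mul_one]
    ring

theorem gammaZeroChar_apply (M : gammaZero) :
    gammaZeroChar M = .ofAdd (PadicInt.toZMod (offDiagSum M)) :=
  rfl

theorem gammaZeroChar_eq_one_iff {M : gammaZero} :
    gammaZeroChar M = 1 ↔ (M : GL (Fin 2) ℚ_[2]) ∈ GSet := by
  have h2 : ‖offDiagSum M‖ ≤ ((2 : ℕ) : ℝ)⁻¹ ↔ ‖M.1 0 1 + M.1 1 0 / 2‖ ≤ 2⁻¹ := Iff.rfl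
  rw [gammaZeroChar_apply, ofAdd_eq_one, toZMod_eq_zero_iff_norm_le_inv, h2]
  exact ⟨fun hM => ⟨M.2, hM⟩, fun hM => hM.2⟩

/-- The group `G`, as the subgroup of `GL₂(ℚ₂)` underlying the kernel of `gammaZeroChar`. -/
def gammaZeroCharKer : Subgroup (GL (Fin 2) ℚ_[2]) :=
  gammaZeroChar.ker.map gammaZero.subtype

theorem coe_gammaZeroCharKer : (gammaZeroCharKer : Set (GL (Fin 2) ℚ_[2])) = GSet := by
  ext M
  constructor
  · rintro ⟨M, hM, rfl⟩
    exact gammaZeroChar_eq_one_iff.1 hM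
  · exact fun hM => ⟨⟨M, hM.1⟩, gammaZeroChar_eq_one_iff.2 hM, rfl⟩

theorem gammaZeroCharKer_le : gammaZeroCharKer ≤ gammaZero :=
  Subgroup.map_subtype_le _

theorem mem_gammaZeroCharKer_iff {M : GL (Fin 2) ℚ_[2]} :
    M ∈ gammaZeroCharKer ↔ ∃ a b c d, PadicInt.toZMod a = 1 ∧ PadicInt.toZMod d = 1 ∧
      PadicInt.toZMod (b + c) = 0 ∧
      (M : Matrix (Fin 2) (Fin 2) ℚ_[2]) = iwahoriMatrix a b c d := by
  constructor
  · rintro ⟨M, hker, rfl⟩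
    obtain ⟨a, b, c, d, ha, hd, h⟩ := mem_gammaZeroSet_iff.1 M.2
    exact ⟨a, b, c, d, ha, hd, offDiagSum_eq h ▸ hker, h⟩
  · rintro ⟨a, b, c, d, ha, hd, hbc, h⟩
    let M' : gammaZero := ⟨M, mem_gammaZeroSet_iff.2 ⟨a, b, c, d, ha, hd, h⟩⟩
    have hM' : offDiagSum M' = b + c := offDiagSum_eq h
    exact ⟨M', show PadicInt.toZMod (offDiagSum M') = 0 from hM' ▸ hbc, rfl⟩

theorem coe_cElt : (cElt : Matrix (Fin 2) (Fin 2) ℚ_[2]) = iwahoriMatrix 1 2 1 (-1) := by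
  ext i j
  fin_cases i <;> fin_cases j <;> simp [cElt, iwahoriMatrix]; rfl

theorem cElt_mem_gammaZero : cElt ∈ gammaZero :=
  mem_gammaZeroSet_iff.2 ⟨1, 2, 1, -1, map_one _, by rw [map_neg, map_one]; rfl, coe_cElt⟩

theorem gammaZeroChar_cElt : gammaZeroChar ⟨cElt, cElt_mem_gammaZero⟩ = .ofAdd 1 := by
  rw [gammaZeroChar_apply, offDiagSum_eq coe_cElt, map_add, toZMod_two, map_one, zero_add]

theorem cElt_notMem_gammaZeroCharKer : cElt ∉ gammaZeroCharKer := by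
  rintro ⟨M, hker, hM⟩
  obtain rfl : M = ⟨cElt, cElt_mem_gammaZero⟩ := Subtype.ext hM
  exact absurd (gammaZeroChar_cElt.symm.trans hker) (by decide)

theorem gammaZeroChar_surjective : Function.Surjective gammaZeroChar := by
  have eq_one_or_eq : ∀ y : Multiplicative (ZMod 2), y = 1 ∨ y = .ofAdd 1 := by decide
  intro y
  rcases eq_one_or_eq y with rfl | rfl
  exacts [⟨1, map_one _⟩, ⟨_, gammaZeroChar_cElt⟩]

theorem relIndex_gammaZeroCharKer : gammaZeroCharKer.relIndex gammaZero = 2 := by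
  rw [Subgroup.relIndex, gammaZeroCharKer, Subgroup.subgroupOf,
    Subgroup.comap_map_eq_self_of_injective gammaZero.subtype_injective, Subgroup.index_ker,
    MonoidHom.range_eq_top.2 gammaZeroChar_surjective]
  simp

end GammaZero

section ScalarsAndUniformizer

theorem coe_gElt_mul_self : (gElt * gElt).1 = (2 : ℚ_[2]) • 1 := by
  simp [gElt, Matrix.one_fin_two]

theorem coe_gElt_conj {M : GL (Fin 2) ℚ_[2]} {a b c d : ℤ_[2]}
    (hM : (M : Matrix (Fin 2) (Fin 2) ℚ_[2]) = iwahoriMatrix a b c d) :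
    (gElt * M * gElt⁻¹).1 = iwahoriMatrix d c b a := by
  have hcomm : gElt.1 * iwahoriMatrix a b c d = iwahoriMatrix d c b a * gElt.1 := by
    simp [gElt, iwahoriMatrix, mul_comm]
  rw [Units.val_mul, Units.val_mul, hM, hcomm, mul_assoc, Units.mul_inv, mul_one]

theorem coe_center_eq_scalarSet :
    (Subgroup.center (GL (Fin 2) ℚ_[2]) : Set (GL (Fin 2) ℚ_[2])) = scalarSet := by
  ext M
  simp only [Matrix.GeneralLinearGroup.center_eq_range_scalar]
  constructor
  · rintro ⟨u, rfl⟩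
    refine ⟨u, u.ne_zero, by simp [Matrix.smul_one_eq_diagonal]⟩
  · rintro ⟨l, hl, hM⟩
    refine ⟨Units.mk0 l hl, Units.ext ?_⟩
    simp [hM, Matrix.smul_one_eq_diagonal]

theorem gElt_mul_self_mem_center : gElt * gElt ∈ Subgroup.center (GL (Fin 2) ℚ_[2]) := by
  rw [← SetLike.mem_coe, coe_center_eq_scalarSet]
  exact ⟨2, two_ne_zero, coe_gElt_mul_self⟩

theorem gElt_mem_normalizer {H : Subgroup (GL (Fin 2) ℚ_[2])}
    (hH : ∀ M ∈ H, gElt * M * gElt⁻¹ ∈ H) :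
    gElt ∈ Subgroup.normalizer (H : Set (GL (Fin 2) ℚ_[2])) :=
  mem_normalizer_of_mul_self_mem_normalizer
    (Subgroup.center_le_normalizer _ gElt_mul_self_mem_center) hH

theorem gElt_mem_normalizer_gammaZero :
    gElt ∈ Subgroup.normalizer (gammaZero : Set (GL (Fin 2) ℚ_[2])) := by
  refine gElt_mem_normalizer fun M hM => ?_
  obtain ⟨a, b, c, d, ha, hd, h⟩ := mem_gammaZeroSet_iff.1 hM
  exact mem_gammaZeroSet_iff.2 ⟨d, c, b, a, hd, ha, coe_gElt_conj h⟩

theorem gElt_mem_normalizer_gammaZeroCharKer :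
    gElt ∈ Subgroup.normalizer (gammaZeroCharKer : Set (GL (Fin 2) ℚ_[2])) := by
  refine gElt_mem_normalizer fun M hM => ?_
  obtain ⟨a, b, c, d, ha, hd, hbc, h⟩ := mem_gammaZeroCharKer_iff.1 hM
  exact mem_gammaZeroCharKer_iff.2 ⟨d, c, b, a, hd, ha, add_comm b c ▸ hbc, coe_gElt_conj h⟩

theorem center_inf_gammaZero_le :
    Subgroup.center (GL (Fin 2) ℚ_[2]) ⊓ gammaZero ≤ gammaZeroCharKer := by
  rintro M ⟨hZ, hΓ⟩
  obtain ⟨l, -, hl⟩ : M ∈ scalarSet := coe_center_eq_scalarSet ▸ hZ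
  rw [← SetLike.mem_coe, coe_gammaZeroCharKer]
  exact ⟨hΓ, by simp [hl]⟩

theorem apply_zero_zero_ne_zero_of_mem_center_sup_gammaZero {M : GL (Fin 2) ℚ_[2]}
    (hM : M ∈ Subgroup.center (GL (Fin 2) ℚ_[2]) ⊔ gammaZero) : M 0 0 ≠ 0 := by
  obtain ⟨z, hz, γ, hγ, rfl⟩ := Subgroup.mem_sup_of_normal_left.1 hM
  obtain ⟨l, hl, hz⟩ : z ∈ scalarSet := coe_center_eq_scalarSet ▸ hz
  obtain ⟨a, b, c, d, ha, -, h⟩ := mem_gammaZeroSet_iff.1 hγ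
  have ha0 : a ≠ 0 := by
    rintro rfl
    exact zero_ne_one ((map_zero _).symm.trans ha)
  simp [hz, h, hl, iwahoriMatrix, ha0]

theorem gElt_notMem_center_sup_gammaZero :
    gElt ∉ Subgroup.center (GL (Fin 2) ℚ_[2]) ⊔ gammaZero := fun hg =>
  apply_zero_zero_ne_zero_of_mem_center_sup_gammaZero hg rfl

theorem KSub_eq_sup :
    KSub = Subgroup.center (GL (Fin 2) ℚ_[2]) ⊔ gammaZero ⊔ Subgroup.zpowers gElt := by
  rw [KSub, Subgroup.closure_union, Subgroup.closure_union, ← coe_center_eq_scalarSet,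
    Subgroup.closure_eq, ← Subgroup.zpowers_eq_closure]
  congr 2
  exact gammaZero.closure_eq

theorem NSub_eq_sup : NSub = Subgroup.center (GL (Fin 2) ℚ_[2]) ⊔ gammaZeroCharKer := by
  rw [NSub, Subgroup.closure_union, ← coe_center_eq_scalarSet, ← coe_gammaZeroCharKer,
    Subgroup.closure_eq, Subgroup.closure_eq]

end ScalarsAndUniformizer

/-- Inside `GL₂(ℚ₂)`: (i) `G` is a subgroup of `Γ₀` of index `2`;
(ii) `ℚ₂^× · G` is a normal subgroup of `𝒦 = ⟨ℚ₂^×, Γ₀, g⟩`; and (iii) the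
quotient `𝒦/(ℚ₂^× · G)` is isomorphic to `(ℤ/2)²`, generated by the classes of
`c = [[1, 2], [2, -1]]` and `g = [[0, 1], [2, 0]]`. -/
theorem stmt9 :
    (∃ Γ : Subgroup (GL (Fin 2) ℚ_[2]), (Γ : Set (GL (Fin 2) ℚ_[2])) = gammaZeroSet ∧
      ∃ H : Subgroup (GL (Fin 2) ℚ_[2]), (H : Set (GL (Fin 2) ℚ_[2])) = GSet ∧
        H ≤ Γ ∧ (H.subgroupOf Γ).index = 2) ∧
    (NSub ≤ KSub ∧ (NSub.subgroupOf KSub).Normal) ∧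
    (∃ (hc : cElt ∈ KSub) (hg : gElt ∈ KSub)
      (f : KSub →* Multiplicative (ZMod 2) × Multiplicative (ZMod 2)),
        Function.Surjective f ∧ f.ker = NSub.subgroupOf KSub ∧
        Subgroup.closure {f ⟨cElt, hc⟩, f ⟨gElt, hg⟩} = ⊤) := by
  refine ⟨⟨gammaZero, rfl, gammaZeroCharKer, coe_gammaZeroCharKer, gammaZeroCharKer_le,
    relIndex_gammaZeroCharKer⟩, ?_⟩
  rw [KSub_eq_sup, NSub_eq_sup]
  refine ⟨⟨(sup_le_sup_left gammaZeroCharKer_le _).trans le_sup_left,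
    Subgroup.normal_subgroupOf_of_le_normalizer <| sup_sup_zpowers_le_normalizer_sup
      gammaZeroCharKer_le relIndex_gammaZeroCharKer gElt_mem_normalizer_gammaZeroCharKer⟩, ?_⟩
  exact exists_surjective_ker_eq_subgroupOf_of_relIndex_eq_two gammaZeroCharKer_le
    relIndex_gammaZeroCharKer center_inf_gammaZero_le cElt_mem_gammaZero
    cElt_notMem_gammaZeroCharKer gElt_mem_normalizer_gammaZero
    gElt_mem_normalizer_gammaZeroCharKer gElt_mul_self_mem_center
    gElt_notMem_center_sup_gammaZero _

end
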